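/- arXiv:1807.11837 — 4 statements merged into one kernel-verified Lean document; each statement's English description precedes it below -/
import Mathlib

section
/- For all (t, s) with a+1 ≤ t ≤ b and a+2 ≤ s ≤ b, the left-focal Green's function satisfies G_l(t, s) ≥ 0. -/
/-- Rising factorial `rf x r = Γ(x+r)/Γ(x)`, with the convention `rf 0 r = 0`. -/
noncomputable def rf (x r : ℝ) : ℝ := if x = 0 then 0 else Real.Gamma (x + r) / Real.Gamma x

/-- The left-focal Green's function. -/
noncomputable def Gl (a b : ℤ) (α : ℝ) (t s : ℤ) : ℝ :=
  if t ≤ s - 1 then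
    (1 / Real.Gamma α) *
      (rf (b - s + 1 : ℝ) (α - 1) * rf (t - a : ℝ) (α - 2) / rf (b - a : ℝ) (α - 2))
  else
    (1 / Real.Gamma α) *
      (rf (b - s + 1 : ℝ) (α - 1) * rf (t - a : ℝ) (α - 2) / rf (b - a : ℝ) (α - 2) -
        rf (t - s + 1 : ℝ) (α - 1))

/-!
For `t < s` all factors of `Gl` are positive. For `s ≤ t`, note that `x ↦ x + 1` multiplies `rf x r`
by `1 + r / x`. Since `0 < t - s + 1 ≤ t - a`, the factor `1 + (α - 1) / (t - s + 1)` by which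
`rf (t - s + 1) (α - 1)` grows under `t ↦ t + 1` is at least the corresponding factor
`1 + (α - 2) / (t - a)` of `rf (t - a) (α - 2)`. Hence the quotient
`rf (t - s + 1) (α - 1) / rf (t - a) (α - 2)` is at most its value at `t = b`.
-/

/-- At `x = 0` both sides vanish, because `Real.Gamma 0 = 0` and division by zero gives `0`. -/
theorem rf_eq_Gamma_div (x r : ℝ) : rf x r = Real.Gamma (x + r) / Real.Gamma x := by
  rw [rf, ite_eq_right_iff]
  rintro rfl
  rw [Real.Gamma_zero, div_zero]

theorem rf_pos {x r : ℝ} (hx : 0 < x) (hxr : 0 < x + r) : 0 < rf x r := by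
  rw [rf_eq_Gamma_div]
  exact div_pos (Real.Gamma_pos_of_pos hxr) (Real.Gamma_pos_of_pos hx)

theorem rf_add_one {x r : ℝ} (hx : x ≠ 0) (hxr : x + r ≠ 0) :
    rf (x + 1) r = (x + r) / x * rf x r := by
  rw [rf_eq_Gamma_div, rf_eq_Gamma_div, add_right_comm, Real.Gamma_add_one hxr,
    Real.Gamma_add_one hx, mul_div_mul_comm]

theorem add_div_self_le_add_div_self {K : Type*} [Field K] [LinearOrder K] [IsStrictOrderedRing K]
    {x y p q : K} (hx : 0 < x) (hy : 0 < y) (hcross : q * x ≤ p * y) :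
    (y + q) / y ≤ (x + p) / x := by
  rw [div_le_div_iff₀ hy hx]
  linarith

theorem rf_mul_rf_add_natCast_le {x y p q : ℝ} (hx : 0 < x) (hy : 0 < y)
    (hyq : 0 < y + q) (hqp : q ≤ p) (hcross : q * x ≤ p * y) (n : ℕ) :
    rf x p * rf (y + n) q ≤ rf (x + n) p * rf y q := by
  have hxp : 0 < x + p := by
    have hmul : (y + q) * x ≤ (x + p) * y := by linarith
    exact pos_of_mul_pos_left ((mul_pos hyq hx).trans_le hmul) hy.le
  induction n with
  | zero => simp
  | succ n ih =>
    have hxn : 0 < x + n := by positivity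
    have hyn : 0 < y + n := by positivity
    have hxpn : 0 < x + n + p := by linarith [n.cast_nonneg (α := ℝ)]
    have hyqn : 0 < y + n + q := by linarith [n.cast_nonneg (α := ℝ)]
    have hcross_n : q * (x + n) ≤ p * (y + n) := by
      linarith [mul_le_mul_of_nonneg_right hqp (n.cast_nonneg (α := ℝ))]
    have factor_le : (y + n + q) / (y + n) ≤ (x + n + p) / (x + n) :=
      add_div_self_le_add_div_self hxn hyn hcross_n
    have lhs_nonneg : 0 ≤ rf x p * rf (y + n) q :=
      mul_nonneg (rf_pos hx hxp).le (rf_pos hyn hyqn).le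
    calc rf x p * rf (y + (n + 1 : ℕ)) q
        = (y + n + q) / (y + n) * (rf x p * rf (y + n) q) := by
          rw [Nat.cast_succ, ← add_assoc, rf_add_one hyn.ne' hyqn.ne', mul_left_comm]
      _ ≤ (x + n + p) / (x + n) * (rf (x + n) p * rf y q) := by gcongr
      _ = rf (x + (n + 1 : ℕ)) p * rf y q := by
          rw [Nat.cast_succ, ← add_assoc, rf_add_one hxn.ne' hxpn.ne', mul_assoc]

theorem rf_le_rf_mul_rf_div_rf {a b t s : ℤ} {α : ℝ} (hα : 1 < α) (has : a < s)
    (hst : s ≤ t) (htb : t ≤ b) :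
    rf (t - s + 1) (α - 1) ≤
      rf (b - s + 1) (α - 1) * rf (t - a) (α - 2) / rf (b - a) (α - 2) := by
  obtain ⟨n, rfl⟩ := Int.le.dest htb
  have has' : (a : ℝ) + 1 ≤ s := mod_cast has
  have hst' : (s : ℝ) ≤ t := mod_cast hst
  have hcross : (α - 2) * (t - s + 1 : ℝ) ≤ (α - 1) * (t - a) :=
    mul_le_mul (by linarith) (by linarith) (by linarith) (by linarith)
  have hprod : rf (t - s + 1) (α - 1) * rf (t - a + n) (α - 2) ≤
      rf (t - s + 1 + n) (α - 1) * rf (t - a) (α - 2) :=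
    rf_mul_rf_add_natCast_le (by linarith) (by linarith) (by linarith) (by linarith) hcross n
  have hden : 0 < rf (t - a + n) (α - 2) := by
    apply rf_pos <;> linarith [n.cast_nonneg (α := ℝ)]
  have hbs : ((t + n : ℤ) : ℝ) - s + 1 = t - s + 1 + n := by push_cast; ring
  have hba : ((t + n : ℤ) : ℝ) - a = t - a + n := by push_cast; ring
  rw [hbs, hba, le_div_iff₀ hden]
  exact hprod

theorem left_focal_green_nonneg_general {a b t s : ℤ} {α : ℝ} (hα : 1 < α) (hat : a < t)
    (htb : t ≤ b) (has : a < s) (hsb : s ≤ b) : 0 ≤ Gl a b α t s := by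
  have hat' : (a : ℝ) + 1 ≤ t := mod_cast hat
  have htb' : (t : ℝ) ≤ b := mod_cast htb
  have hsb' : (s : ℝ) ≤ b := mod_cast hsb
  have hΓ : 0 ≤ 1 / Real.Gamma α := one_div_nonneg.2 (Real.Gamma_pos_of_pos (by linarith)).le
  rw [Gl]
  split_ifs with hts
  · have hbs : 0 < rf (b - s + 1) (α - 1) := rf_pos (by linarith) (by linarith)
    have hta : 0 < rf (t - a) (α - 2) := rf_pos (by linarith) (by linarith)
    have hba : 0 < rf (b - a) (α - 2) := rf_pos (by linarith) (by linarith)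
    exact mul_nonneg hΓ (by positivity)
  · exact mul_nonneg hΓ (sub_nonneg.2 (rf_le_rf_mul_rf_div_rf hα has (by lia) htb))

theorem left_focal_green_nonneg (a b : ℤ) (hab : 2 ≤ b - a) (α : ℝ)
    (hα1 : 1 < α) (hα2 : α < 2) :
    ∀ t s : ℤ, a + 1 ≤ t → t ≤ b → a + 2 ≤ s → s ≤ b → 0 ≤ Gl a b α t s := by
  intro t s hat htb has hsb
  exact left_focal_green_nonneg_general hα1 (by lia) htb (by lia) hsb
end

section
/- For every t with a+1 ≤ t ≤ b, the row sum of the left-focal Green's function has the closed form ∑_{s=a+2}^{b} G_l(t, s) = [ rf(t−a, α−2) / rf(b−a, α−2) ] · rf(b−a−1, α)/Γ(α+1) − rf(t−a−1, α)/Γ(α+1). -/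
/-!
For the reciprocal Gamma function `1 / Γ(x) = x / Γ(x + 1)` for every `x`, with zeros at the
integers `n ≤ 0`. The first property gives the difference rule
`α * rf (x + 1) (α - 1) = rf (x + 1) α - rf x α`, so sums of `rf (t - s + 1) (α - 1)` over `s`
telescope. The second makes `rf (t - s + 1) (α - 1)` vanish for `s > t`, so both branches of `Gl`
are given by the formula of the second one.
-/

theorem inv_Gamma_eq_mul_inv_Gamma_add_one (x : ℝ) :
    (Real.Gamma x)⁻¹ = x * (Real.Gamma (x + 1))⁻¹ := by
  rcases eq_or_ne x 0 with rfl | hx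
  · simp
  · rw [Real.Gamma_add_one hx, mul_inv, mul_inv_cancel_left₀ hx]

-- This covers `x = 0` since the junk value `Real.Gamma 0 = 0` gives `0⁻¹ = 0` there.
theorem rf_eq_Gamma_mul_inv_Gamma (x r : ℝ) :
    rf x r = Real.Gamma (x + r) * (Real.Gamma x)⁻¹ := by
  rcases eq_or_ne x 0 with rfl | hx
  · simp [rf]
  · rw [rf, if_neg hx, div_eq_mul_inv]

theorem rf_intCast_eq_zero_of_nonpos {n : ℤ} (hn : n ≤ 0) (r : ℝ) : rf n r = 0 := by
  obtain ⟨m, rfl⟩ := Int.exists_eq_neg_ofNat hn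
  rw [rf_eq_Gamma_mul_inv_Gamma, Int.cast_neg, Int.cast_natCast, Real.Gamma_neg_nat_eq_zero,
    inv_zero, mul_zero]

theorem mul_rf_add_one_sub_one {x α : ℝ} (h : x + α ≠ 0) :
    α * rf (x + 1) (α - 1) = rf (x + 1) α - rf x α := by
  have lower_order : x + 1 + (α - 1) = x + α := by ring
  have Gamma_succ : Real.Gamma (x + 1 + α) = (x + α) * Real.Gamma (x + α) := by
    rw [add_right_comm, Real.Gamma_add_one h]
  simp only [rf_eq_Gamma_mul_inv_Gamma]
  rw [lower_order, Gamma_succ, inv_Gamma_eq_mul_inv_Gamma_add_one x]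
  ring

theorem mul_sum_Icc_rf_sub_one {α : ℝ} (hα : ∀ m : ℕ, α ≠ -m) {a t : ℤ} (hat : a ≤ t) :
    α * ∑ s ∈ Finset.Icc (a + 1) t, rf (t - s + 1) (α - 1) = rf (t - a) α := by
  induction a, hat using Int.leInductionDown with
  | base => simp [rf]
  | pred a hat ih =>
    obtain ⟨m, hm⟩ := Int.le.dest hat
    have htam : (t - a : ℝ) = m := by rw [← hm]; push_cast; ring
    have not_pole : (t - a : ℝ) + α ≠ 0 := fun h => hα m (by linarith)
    rw [sub_add_cancel, ← Finset.insert_Icc_add_one_left_eq_Icc hat,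
      Finset.sum_insert (by simp), mul_add, ih, mul_rf_add_one_sub_one not_pole]
    push_cast
    ring_nf

theorem sum_Icc_rf_eq_of_le (a : ℤ) {t b : ℤ} (htb : t ≤ b) (r : ℝ) :
    ∑ s ∈ Finset.Icc a b, rf (t - s + 1) r = ∑ s ∈ Finset.Icc a t, rf (t - s + 1) r := by
  refine (Finset.sum_subset (Finset.Icc_subset_Icc_right htb) fun s hsb hst => ?_).symm
  have nonpos : t - s + 1 ≤ 0 := by
    rw [Finset.mem_Icc] at hsb hst
    lia
  exact_mod_cast rf_intCast_eq_zero_of_nonpos nonpos r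

theorem Gl_eq (a b : ℤ) (α : ℝ) (t s : ℤ) :
    Gl a b α t s = (1 / Real.Gamma α) *
      (rf (t - a) (α - 2) / rf (b - a) (α - 2) * rf (b - s + 1) (α - 1) -
        rf (t - s + 1) (α - 1)) := by
  unfold Gl
  split_ifs with hts
  · have vanishing : rf (t - s + 1) (α - 1) = 0 := by
      exact_mod_cast rf_intCast_eq_zero_of_nonpos (show t - s + 1 ≤ 0 by lia) (α - 1)
    rw [vanishing]
    ring
  · ring

theorem left_focal_green_row_sum_general {α : ℝ} (hα : ∀ m : ℕ, α - 1 ≠ -m) {a b t : ℤ}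
    (hat : a + 1 ≤ t) (htb : t ≤ b) :
    ∑ s ∈ Finset.Icc (a + 2) b, Gl a b α t s =
      rf (t - a : ℝ) (α - 2) / rf (b - a : ℝ) (α - 2) *
        rf (b - a - 1 : ℝ) α / Real.Gamma (α + 1) -
      rf (t - a - 1 : ℝ) α / Real.Gamma (α + 1) := by
  have not_pole (m : ℕ) : α ≠ -m := fun h => hα (m + 1) (by rw [h]; push_cast; ring)
  have hα0 : α ≠ 0 := by simpa using not_pole 0
  have kernel_sum {u : ℤ} (hau : a + 1 ≤ u) :
      ∑ s ∈ Finset.Icc (a + 2) u, rf (u - s + 1) (α - 1) = rf (u - a - 1) α / α := by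
    rw [eq_div_iff hα0, mul_comm]
    simpa [add_assoc, sub_sub, one_add_one_eq_two] using mul_sum_Icc_rf_sub_one not_pole hau
  simp only [Gl_eq]
  rw [← Finset.mul_sum, Finset.sum_sub_distrib, ← Finset.mul_sum, sum_Icc_rf_eq_of_le _ htb,
    kernel_sum hat, kernel_sum (hat.trans htb), Real.Gamma_add_one hα0]
  ring

theorem left_focal_green_row_sum (a b : ℤ) (hab : 2 ≤ b - a) (α : ℝ)
    (hα1 : 1 < α) (hα2 : α < 2) :
    ∀ t : ℤ, a + 1 ≤ t → t ≤ b →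
      ∑ s ∈ Finset.Icc (a + 2) b, Gl a b α t s =
        rf (t - a : ℝ) (α - 2) / rf (b - a : ℝ) (α - 2) *
          rf (b - a - 1 : ℝ) α / Real.Gamma (α + 1) -
        rf (t - a - 1 : ℝ) α / Real.Gamma (α + 1) := by
  intro t hat htb
  exact left_focal_green_row_sum_general
    (fun m h => by linarith [(m.cast_nonneg : (0 : ℝ) ≤ m)]) hat htb
end

section
/- Let 1 < α < 2, let n ≥ 2 be an integer, and let λ be a real number with |λ| < 1. If |λ| < (α − 1)/(n − 1)², then λ·E_{−λ, α, α−1}(n, 0) + E_{−λ, α, α−2}(n, 0) ≠ 0. -/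
/-- The nabla discrete Mittag-Leffler function `E_{p,α,β}(n,0)`. -/
noncomputable def ML (p α β : ℝ) (n : ℤ) : ℝ :=
  ∑' k : ℕ, p ^ k * rf (n : ℝ) (α * k + β) / Real.Gamma (α * k + β + 1)

/-!
Put `q m x = x (x + 1) ⋯ (x + m - 1)` with `m = n - 1`. Since `q m 0 = 0`, shifting the index of the
first series by one merges the two of them, up to the factor `1 / m!`, into
`∑ k, (q m (α k + α - 1) - q m (α k)) (-λ) ^ k`. The coefficients are nonnegative, and by induction
on `m` the ratio of consecutive ones is at most `m ^ 2 / (α - 1)`. Hence, when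
`|λ| m ^ 2 < α - 1`, the absolute values of the terms do not increase and the second is smaller than
the first, so grouping the terms in pairs shows that the sum is positive.
-/

open Polynomial Set

open scoped fwdDiff Nat

section Pochhammer

variable {K : Type*} [CommRing K]

lemma mul_ascPochhammer_eval_add_one (m : ℕ) (x : K) :
    x * (ascPochhammer K m).eval (x + 1) = (x + m) * (ascPochhammer K m).eval x := by
  calc x * (ascPochhammer K m).eval (x + 1) = (ascPochhammer K (m + 1)).eval x := by
        simp [ascPochhammer_succ_left]
    _ = (x + m) * (ascPochhammer K m).eval x := by rw [ascPochhammer_succ_eval, mul_comm]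

lemma fwdDiff_ascPochhammer_succ_eval (m : ℕ) (s x : K) :
    Δ_[s] (ascPochhammer K (m + 1)).eval x =
      (x + m) * Δ_[s] (ascPochhammer K m).eval x + s * (ascPochhammer K m).eval (x + s) := by
  simp only [fwdDiff, ascPochhammer_succ_eval]
  ring

variable [LinearOrder K] [IsStrictOrderedRing K]

lemma monotoneOn_ascPochhammer_eval (m : ℕ) : MonotoneOn (ascPochhammer K m).eval (Ici 0) := by
  induction m with
  | zero => simpa using monotoneOn_const
  | succ m ih =>
    intro x (hx : 0 ≤ x) y (hy : 0 ≤ y) hxy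
    have hq : 0 ≤ (ascPochhammer K m).eval y := by
      rcases hy.eq_or_lt with rfl | hy
      · rw [ascPochhammer_eval_zero]
        split_ifs <;> simp
      · exact (ascPochhammer_pos m y hy).le
    simp only [ascPochhammer_succ_eval]
    gcongr
    exact ih hx hy hxy

lemma fwdDiff_ascPochhammer_eval_nonneg (m : ℕ) {s x : K} (hs : 0 ≤ s) (hx : 0 ≤ x) :
    0 ≤ Δ_[s] (ascPochhammer K m).eval x :=
  sub_nonneg.2 <| monotoneOn_ascPochhammer_eval m hx (add_nonneg hx hs) (le_add_of_nonneg_right hs)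

lemma mul_ascPochhammer_eval_add_le (m : ℕ) {s a y : K} (hs : 0 < s) (hs1 : s ≤ 1) (hsy : s ≤ y)
    (ha : 0 ≤ a) (ha2 : a ≤ 2) :
    s * (ascPochhammer K m).eval (y + a) ≤ (m + 1) ^ 2 * (ascPochhammer K m).eval y := by
  have hy : 0 < y := hs.trans_le hsy
  have hq : 0 < (ascPochhammer K m).eval y := ascPochhammer_pos m y hy
  have shift_two : y * (y + 1) * (ascPochhammer K m).eval (y + 2) =
      (y + m) * (y + m + 1) * (ascPochhammer K m).eval y := by
    have h₀ := mul_ascPochhammer_eval_add_one m y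
    have h₁ := mul_ascPochhammer_eval_add_one m (y + 1)
    rw [add_assoc, one_add_one_eq_two] at h₁
    linear_combination y * h₁ + (y + 1 + m) * h₀
  have first_factor : s * (y + m) ≤ y * (m + 1) := by
    linarith [mul_le_of_le_one_left hy.le hs1, mul_le_mul_of_nonneg_right hsy (Nat.cast_nonneg m)]
  have second_factor : y + m + 1 ≤ (y + 1) * (m + 1) := by
    linarith [mul_nonneg hy.le (Nat.cast_nonneg (α := K) m)]
  have mono : (ascPochhammer K m).eval (y + a) ≤ (ascPochhammer K m).eval (y + 2) :=
    monotoneOn_ascPochhammer_eval m (add_nonneg hy.le ha) (add_nonneg hy.le zero_le_two) (by gcongr)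
  refine le_of_mul_le_mul_left ?_ (by positivity : 0 < y * (y + 1))
  calc y * (y + 1) * (s * (ascPochhammer K m).eval (y + a))
      ≤ y * (y + 1) * (s * (ascPochhammer K m).eval (y + 2)) := by gcongr
    _ = (s * (y + m)) * (y + m + 1) * (ascPochhammer K m).eval y := by
        linear_combination s * shift_two
    _ ≤ (y * (m + 1)) * ((y + 1) * (m + 1)) * (ascPochhammer K m).eval y := by gcongr
    _ = y * (y + 1) * ((m + 1) ^ 2 * (ascPochhammer K m).eval y) := by ring

lemma mul_fwdDiff_ascPochhammer_eval_add_le (m : ℕ) {s a x : K} (hs : 0 < s) (hs1 : s ≤ 1)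
    (ha : 0 ≤ a) (ha2 : a ≤ 2) (hx : 0 ≤ x) :
    s * Δ_[s] (ascPochhammer K m).eval (x + a) ≤ m ^ 2 * Δ_[s] (ascPochhammer K m).eval x := by
  induction m with
  | zero => simp [fwdDiff]
  | succ m ih =>
    have hD := fwdDiff_ascPochhammer_eval_nonneg m hs.le hx
    have hq := mul_ascPochhammer_eval_add_le m hs hs1 (le_add_of_nonneg_left hx) ha ha2
    have coeff_le : (x + a + m) * (m : K) ^ 2 ≤ (m + 1) ^ 2 * (x + m) := by
      have hxm : 0 ≤ (2 * m + 1) * x + m := by positivity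
      have ham : a * (m : K) ^ 2 ≤ 2 * m ^ 2 := by gcongr
      linarith
    rw [fwdDiff_ascPochhammer_succ_eval, fwdDiff_ascPochhammer_succ_eval, add_right_comm x a s]
    push_cast
    calc s * ((x + a + m) * Δ_[s] (ascPochhammer K m).eval (x + a)
            + s * (ascPochhammer K m).eval (x + s + a))
        = (x + a + m) * (s * Δ_[s] (ascPochhammer K m).eval (x + a))
            + s * (s * (ascPochhammer K m).eval (x + s + a)) := by ring
      _ ≤ (x + a + m) * (m ^ 2 * Δ_[s] (ascPochhammer K m).eval x)
            + s * ((m + 1) ^ 2 * (ascPochhammer K m).eval (x + s)) := by gcongr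
      _ = (x + a + m) * m ^ 2 * Δ_[s] (ascPochhammer K m).eval x
            + s * ((m + 1) ^ 2 * (ascPochhammer K m).eval (x + s)) := by ring
      _ ≤ (m + 1) ^ 2 * (x + m) * Δ_[s] (ascPochhammer K m).eval x
            + s * ((m + 1) ^ 2 * (ascPochhammer K m).eval (x + s)) := by gcongr
      _ = (m + 1) ^ 2 * ((x + m) * Δ_[s] (ascPochhammer K m).eval x
            + s * (ascPochhammer K m).eval (x + s)) := by ring

end Pochhammer

section Series

variable {R : Type*} [NormedCommRing R] [HasSummableGeomSeries R]

lemma summable_polynomial_eval_mul_pow (P : R[X]) {r : R} (hr : ‖r‖ < 1) :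
    Summable fun k : ℕ ↦ P.eval (k : R) * r ^ k := by
  simp only [eval_eq_sum_range, Finset.sum_mul, mul_assoc]
  exact summable_sum fun j _ ↦ (summable_pow_mul_geometric_of_norm_lt_one j hr).mul_left (P.coeff j)

lemma summable_polynomial_eval_affine_mul_pow (P : R[X]) (a b : R) {r : R} (hr : ‖r‖ < 1) :
    Summable fun k : ℕ ↦ P.eval (a * k + b) * r ^ k := by
  refine (summable_polynomial_eval_mul_pow (P.comp (C a * X + C b)) hr).congr fun k ↦ ?_
  simp

lemma tsum_pos_of_pair_sums {f : ℕ → ℝ} (hf : Summable f)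
    (hpair : ∀ k, 0 ≤ f (2 * k) + f (2 * k + 1)) (hpos : 0 < f 0 + f 1) : 0 < ∑' k, f k := by
  have heven : Summable fun k ↦ f (2 * k) :=
    hf.comp_injective (mul_right_injective₀ two_ne_zero)
  have hodd : Summable fun k ↦ f (2 * k + 1) :=
    hf.comp_injective ((add_left_injective 1).comp (mul_right_injective₀ two_ne_zero))
  rw [← tsum_even_add_odd heven hodd, ← heven.tsum_add hodd]
  exact (heven.add hodd).tsum_pos hpair 0 hpos

lemma tsum_mul_pow_pos {d : ℕ → ℝ} {p : ℝ} (hsum : Summable fun k ↦ d k * p ^ k)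
    (hd : ∀ k, 0 ≤ d k) (hstep : ∀ k, |p| * d (k + 1) ≤ d k) (hpos : |p| * d 1 < d 0) :
    0 < ∑' k, d k * p ^ k := by
  have neg_le (k : ℕ) : -(|p| * d k) ≤ p * d k := by
    rw [← neg_mul]
    exact mul_le_mul_of_nonneg_right (neg_abs_le p) (hd k)
  refine tsum_pos_of_pair_sums hsum (fun k ↦ ?_) (by linarith [neg_le 1])
  calc 0 ≤ (p ^ k) ^ 2 * (d (2 * k) + p * d (2 * k + 1)) :=
        mul_nonneg (sq_nonneg _) (by linarith [hstep (2 * k), neg_le (2 * k + 1)])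
    _ = d (2 * k) * p ^ (2 * k) + d (2 * k + 1) * p ^ (2 * k + 1) := by ring

lemma tsum_fwdDiff_ascPochhammer_mul_pow_pos {m : ℕ} (hm : m ≠ 0) {s a p : ℝ} (hs : 0 < s)
    (hs1 : s ≤ 1) (ha : 0 ≤ a) (ha2 : a ≤ 2) (hp : |p| * m ^ 2 < s) :
    0 < ∑' k : ℕ, Δ_[s] (ascPochhammer ℝ m).eval (a * k) * p ^ k := by
  have hp1 : |p| < 1 := by
    have hm1 : (1 : ℝ) ≤ m := by exact_mod_cast Nat.one_le_iff_ne_zero.2 hm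
    exact (le_mul_of_one_le_right (abs_nonneg p) (one_le_pow₀ hm1)).trans_lt (hp.trans_le hs1)
  set d : ℕ → ℝ := fun k ↦ Δ_[s] (ascPochhammer ℝ m).eval (a * k) with hd
  have nonneg (k : ℕ) : 0 ≤ d k := fwdDiff_ascPochhammer_eval_nonneg m hs.le (by positivity)
  have ratio (k : ℕ) : s * d (k + 1) ≤ m ^ 2 * d k := by
    simpa only [hd, Nat.cast_succ, mul_add_one] using
      mul_fwdDiff_ascPochhammer_eval_add_le m hs hs1 ha ha2 (by positivity : 0 ≤ a * k)
  have ratio_abs (k : ℕ) : s * (|p| * d (k + 1)) ≤ |p| * m ^ 2 * d k := by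
    linarith [mul_le_mul_of_nonneg_left (ratio k) (abs_nonneg p)]
  have pos : 0 < d 0 := by
    simpa [hd, fwdDiff, ascPochhammer_ne_zero_eval_zero ℝ hm] using ascPochhammer_pos m s hs
  refine tsum_mul_pow_pos ?_ nonneg (fun k ↦ ?_) ?_
  · have := (summable_polynomial_eval_affine_mul_pow (ascPochhammer ℝ m) a s hp1).sub
      (summable_polynomial_eval_affine_mul_pow (ascPochhammer ℝ m) a 0 hp1)
    simpa only [hd, fwdDiff, sub_mul, add_zero] using this
  · refine le_of_mul_le_mul_left ((ratio_abs k).trans ?_) hs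
    exact mul_le_mul_of_nonneg_right hp.le (nonneg k)
  · refine lt_of_mul_lt_mul_left ((ratio_abs 0).trans_lt ?_) hs.le
    exact mul_lt_mul_of_pos_right hp pos

end Series

section MittagLeffler

lemma real_Gamma_add_nat_div_Gamma_eq (m : ℕ) {x : ℝ} (hx : ∀ k : ℕ, x ≠ -k) :
    Real.Gamma (x + m) / Real.Gamma x = (ascPochhammer ℝ m).eval x := by
  have hmap : (((ascPochhammer ℝ m).eval x : ℝ) : ℂ) = (ascPochhammer ℂ m).eval (x : ℂ) := by
    rw [← ascPochhammer_map Complex.ofRealHom, eval_map, ← Complex.ofRealHom_eq_coe,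
      ← Complex.ofRealHom_eq_coe, eval₂_at_apply]
  apply Complex.ofReal_injective
  rw [hmap, ← Complex.Gamma_add_nat_div_Gamma_eq (x : ℂ) (by exact_mod_cast hx),
    Complex.ofReal_div, ← Complex.Gamma_ofReal, ← Complex.Gamma_ofReal, Complex.ofReal_add,
    Complex.ofReal_natCast]

lemma rf_natCast_add_one_div_Gamma (m : ℕ) {r : ℝ} (hr : ∀ k : ℕ, r + 1 ≠ -k) :
    rf (m + 1) r / Real.Gamma (r + 1) = (m ! : ℝ)⁻¹ * (ascPochhammer ℝ m).eval (r + 1) := by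
  rw [rf, if_neg m.cast_add_one_ne_zero, Real.Gamma_nat_eq_factorial,
    ← real_Gamma_add_nat_div_Gamma_eq m hr, add_comm (m + 1 : ℝ), add_assoc r, add_comm 1 (m : ℝ)]
  ring

lemma ML_natCast_add_one (p : ℝ) {α β : ℝ} (hα : 0 ≤ α) (hβ : -1 < β) (m : ℕ) :
    ML p α β (m + 1) =
      (m ! : ℝ)⁻¹ * ∑' k : ℕ, (ascPochhammer ℝ m).eval (α * k + (β + 1)) * p ^ k := by
  rw [ML, ← tsum_mul_left]
  refine tsum_congr fun k ↦ ?_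
  have not_pole (j : ℕ) : α * k + β + 1 ≠ -j := by
    have : 0 ≤ α * k + j := by positivity
    linarith
  push_cast
  rw [mul_div_assoc, rf_natCast_add_one_div_Gamma m not_pole]
  ring_nf

lemma tsum_ascPochhammer_mul_pow_eq_mul_tsum {m : ℕ} (hm : m ≠ 0) (α : ℝ) {p : ℝ} (hp : |p| < 1) :
    ∑' k : ℕ, (ascPochhammer ℝ m).eval (α * k) * p ^ k =
      p * ∑' k : ℕ, (ascPochhammer ℝ m).eval (α * k + α) * p ^ k := by
  have hsum : Summable fun k : ℕ ↦ (ascPochhammer ℝ m).eval (α * k) * p ^ k := by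
    simpa using summable_polynomial_eval_affine_mul_pow (ascPochhammer ℝ m) α 0 hp
  rw [hsum.tsum_eq_zero_add, ← tsum_mul_left, Nat.cast_zero, mul_zero,
    ascPochhammer_ne_zero_eval_zero ℝ hm, zero_mul, zero_add]
  refine tsum_congr fun k ↦ ?_
  rw [Nat.cast_succ, mul_add_one, pow_succ]
  ring

lemma mul_ML_add_ML_eq_tsum_fwdDiff {m : ℕ} (hm : m ≠ 0) {α lam : ℝ} (hα : 1 < α)
    (hlam : |lam| < 1) :
    lam * ML (-lam) α (α - 1) (m + 1) + ML (-lam) α (α - 2) (m + 1) =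
      (m ! : ℝ)⁻¹ *
        ∑' k : ℕ, Δ_[α - 1] (ascPochhammer ℝ m).eval (α * k) * (-lam) ^ k := by
  have hp : |-lam| < 1 := by rwa [abs_neg]
  have hsum := summable_polynomial_eval_affine_mul_pow (ascPochhammer ℝ m) α (α - 1) hp
  have hsum₀ := summable_polynomial_eval_affine_mul_pow (ascPochhammer ℝ m) α 0 hp
  simp only [add_zero] at hsum₀
  rw [ML_natCast_add_one _ (by linarith) (by linarith),
    ML_natCast_add_one _ (by linarith) (by linarith)]
  simp only [fwdDiff, sub_mul]
  rw [hsum.tsum_sub hsum₀, tsum_ascPochhammer_mul_pow_eq_mul_tsum hm α hp, sub_add_cancel,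
    show α - 2 + 1 = α - 1 by ring]
  ring

end MittagLeffler

theorem mittag_leffler_no_real_zeros_left (α : ℝ) (hα1 : 1 < α) (hα2 : α < 2)
    (n : ℤ) (hn : 2 ≤ n) (lam : ℝ) (hlam : |lam| < 1)
    (h : |lam| < (α - 1) / ((n - 1 : ℝ)) ^ 2) :
    lam * ML (-lam) α (α - 1) n + ML (-lam) α (α - 2) n ≠ 0 := by
  obtain ⟨m, rfl⟩ : ∃ m : ℕ, n = m + 1 := ⟨(n - 1).toNat, by omega⟩
  have hm : m ≠ 0 := by omega
  have ratio_lt : |-lam| * (m : ℝ) ^ 2 < α - 1 := by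
    rw [lt_div_iff₀ (by simpa using pow_pos (Nat.cast_pos.2 hm.bot_lt) 2)] at h
    simpa using h
  have series_pos := tsum_fwdDiff_ascPochhammer_mul_pow_pos hm (sub_pos.2 hα1)
    (by linarith : α - 1 ≤ 1) (by linarith : 0 ≤ α) hα2.le ratio_lt
  rw [mul_ML_add_ML_eq_tsum_fwdDiff hm hα1 hlam]
  positivity
end

section
/- For all (t, s) with a+1 ≤ t ≤ b and a+2 ≤ s ≤ b, the right-focal Green's function satisfies G_r(t, s) ≥ 0. -/
/-- The right-focal Green's function. -/
noncomputable def Gr (a : ℤ) (α : ℝ) (t s : ℤ) : ℝ :=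
  if t ≤ s - 1 then
    (1 / Real.Gamma α) * rf (t - a - 1 : ℝ) (α - 1)
  else
    (1 / Real.Gamma α) * (rf (t - a - 1 : ℝ) (α - 1) - rf (t - s + 1 : ℝ) (α - 1))

/-!
Since `log Γ` is convex on `(0, ∞)`, its increments over intervals of a fixed length `r ≥ 0`
increase with the left endpoint; exponentiating, `Γ (x + r) / Γ x` increases with `x`.
Both branches of the Green's function are then nonnegative, because `a + 2 ≤ s` gives
`t - s + 1 ≤ t - a - 1`.
-/

theorem map_add_add_map_le_of_convexOn {𝕜 β : Type*} [Field 𝕜] [LinearOrder 𝕜]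
    [IsStrictOrderedRing 𝕜] [AddCommGroup β] [PartialOrder β] [IsOrderedAddMonoid β] [Module 𝕜 β]
    {S : Set 𝕜} {f : 𝕜 → β} {x y r : 𝕜} (hf : ConvexOn 𝕜 S f) (hx : x ∈ S) (hyr : y + r ∈ S)
    (hxy : x ≤ y) (hr : 0 ≤ r) : f (x + r) + f y ≤ f x + f (y + r) := by
  obtain rfl | hxy := hxy.eq_or_lt
  · rw [add_comm]
  -- `x + r` and `y` divide the interval `[x, y + r]` in mirrored proportions.
  have hlen : 0 < y - x + r := by linarith
  set p := (y - x) / (y - x + r) with hp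
  set q := r / (y - x + r) with hq
  have hp0 : 0 ≤ p := div_nonneg (sub_nonneg.mpr hxy.le) hlen.le
  have hq0 : 0 ≤ q := div_nonneg hr hlen.le
  have hpq : p + q = 1 := by rw [hp, hq, ← add_div, div_self hlen.ne']
  have hxr : p • x + q • (y + r) = x + r := by
    simp only [hp, hq, smul_eq_mul]; field_simp; ring
  have hy : q • x + p • (y + r) = y := by
    simp only [hp, hq, smul_eq_mul]; field_simp; ring
  calc f (x + r) + f y
      = f (p • x + q • (y + r)) + f (q • x + p • (y + r)) := by rw [hxr, hy]
    _ ≤ (p • f x + q • f (y + r)) + (q • f x + p • f (y + r)) :=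
        add_le_add (hf.2 hx hyr hp0 hq0 hpq) (hf.2 hx hyr hq0 hp0 (by rw [add_comm, hpq]))
    _ = (p + q) • f x + (p + q) • f (y + r) := by module
    _ = f x + f (y + r) := by rw [hpq, one_smul, one_smul]

theorem Gamma_add_mul_Gamma_le {x y r : ℝ} (hx : 0 < x) (hxy : x ≤ y) (hr : 0 ≤ r) :
    Real.Gamma (x + r) * Real.Gamma y ≤ Real.Gamma (y + r) * Real.Gamma x := by
  have hΓx := Real.Gamma_pos_of_pos hx
  have hΓy := Real.Gamma_pos_of_pos (hx.trans_le hxy)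
  have hΓxr := Real.Gamma_pos_of_pos (add_pos_of_pos_of_nonneg hx hr)
  have hyr : 0 < y + r := by linarith
  have hΓyr := Real.Gamma_pos_of_pos hyr
  have hlog := map_add_add_map_le_of_convexOn Real.convexOn_log_Gamma hx hyr hxy hr
  simp only [Function.comp_apply] at hlog
  rwa [← Real.log_le_log_iff (mul_pos hΓxr hΓy) (mul_pos hΓyr hΓx),
    Real.log_mul hΓxr.ne' hΓy.ne', Real.log_mul hΓyr.ne' hΓx.ne',
    add_comm (Real.log (Real.Gamma (y + r)))]

theorem rf_zero_left (r : ℝ) : rf 0 r = 0 :=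
  if_pos rfl

theorem rf_of_ne_zero {x : ℝ} (hx : x ≠ 0) (r : ℝ) :
    rf x r = Real.Gamma (x + r) / Real.Gamma x :=
  if_neg hx

theorem rf_nonneg {x r : ℝ} (hx : 0 ≤ x) (hxr : 0 ≤ x + r) : 0 ≤ rf x r := by
  obtain rfl | hx := hx.eq_or_lt
  · rw [rf_zero_left]
  · rw [rf_of_ne_zero hx.ne']
    exact div_nonneg (Real.Gamma_nonneg_of_nonneg hxr) (Real.Gamma_nonneg_of_nonneg hx.le)

theorem monotoneOn_rf {r : ℝ} (hr : 0 ≤ r) : MonotoneOn (fun x ↦ rf x r) (Set.Ici 0) := by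
  intro x (hx : 0 ≤ x) y (hy : 0 ≤ y) hxy
  change rf x r ≤ rf y r
  obtain rfl | hx := hx.eq_or_lt
  · rw [rf_zero_left]
    exact rf_nonneg hy (add_nonneg hy hr)
  · have hy : 0 < y := hx.trans_le hxy
    rw [rf_of_ne_zero hx.ne', rf_of_ne_zero hy.ne',
      div_le_div_iff₀ (Real.Gamma_pos_of_pos hx) (Real.Gamma_pos_of_pos hy)]
    exact Gamma_add_mul_Gamma_le hx hxy hr

theorem right_focal_green_nonneg_general {a t s : ℤ} {α : ℝ} (hα : 1 ≤ α) (ht : a + 1 ≤ t)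
    (hs : a + 2 ≤ s) : 0 ≤ Gr a α t s := by
  have hr : 0 ≤ α - 1 := sub_nonneg.mpr hα
  have hΓ : 0 ≤ 1 / Real.Gamma α :=
    one_div_nonneg.mpr (Real.Gamma_nonneg_of_nonneg (zero_le_one.trans hα))
  have hta : (0 : ℝ) ≤ t - a - 1 := by
    exact_mod_cast (by lia : 0 ≤ t - a - 1)
  unfold Gr
  split_ifs with hts
  · exact mul_nonneg hΓ (rf_nonneg hta (add_nonneg hta hr))
  · have hts0 : (0 : ℝ) ≤ t - s + 1 := by
      exact_mod_cast (by lia : 0 ≤ t - s + 1)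
    have hle : (t - s + 1 : ℝ) ≤ t - a - 1 := by
      exact_mod_cast (by lia : t - s + 1 ≤ t - a - 1)
    exact mul_nonneg hΓ (sub_nonneg.mpr (monotoneOn_rf hr hts0 hta hle))

theorem right_focal_green_nonneg (a b : ℤ) (hab : 2 ≤ b - a) (α : ℝ)
    (hα1 : 1 < α) (hα2 : α < 2) :
    ∀ t s : ℤ, a + 1 ≤ t → t ≤ b → a + 2 ≤ s → s ≤ b → 0 ≤ Gr a α t s := by
  intro t s ht _ hs _
  exact right_focal_green_nonneg_general hα1.le ht hs
end
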